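/- Let n ≥ 1, q ∈ [1,∞), and α > 0. Then for every δ > 0 there exists a locally integrable function f on ℝ^n with 0 < ‖f‖_{L^{q,∞}(log L)^{α+1}} < ∞ such that ‖f‖_{𝔏^{q,∞}(log 𝔏)^α} ≤ δ ‖f‖_{L^{q,∞}(log L)^{α+1}}; in other words, the infimum over all such f of the ratio ‖f‖_{𝔏^{q,∞}(log 𝔏)^α} / ‖f‖_{L^{q,∞}(log L)^{α+1}} equals 0. -/

import Mathlib

open MeasureTheory Real Set ENNReal

noncomputable def logFac (s : ℝ) : ℝ := Real.log (Real.exp 1 + 1 / s)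

noncomputable def zygNorm (n : ℕ) (q α : ℝ)
    (f : EuclideanSpace ℝ (Fin n) → ℝ) : ℝ≥0∞ :=
  ⨆ s : Set.Ioi (0 : ℝ),
    (ENNReal.ofReal (logFac s.1) ^ α *
      ⨆ E : {E : Set (EuclideanSpace ℝ (Fin n)) //
          MeasurableSet E ∧ volume E = ENNReal.ofReal s.1},
        ∫⁻ x in E.1, ENNReal.ofReal (|f x| ^ q)) ^ (1 / q)

/-- The non-increasing rearrangement of `f` (with the convention `inf ∅ = ∞`). -/
noncomputable def rearr (n : ℕ) (f : EuclideanSpace ℝ (Fin n) → ℝ) (s : ℝ) : ℝ≥0∞ :=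
  sInf {l : ℝ≥0∞ | volume {x | l < ENNReal.ofReal |f x|} ≤ ENNReal.ofReal s}

/-- The Zygmund norm `‖f‖_{L^q(log L)^α}`. -/
noncomputable def zygmundNorm (n : ℕ) (q α : ℝ)
    (f : EuclideanSpace ℝ (Fin n) → ℝ) : ℝ≥0∞ :=
  (∫⁻ s in Set.Ioi (0 : ℝ),
    ENNReal.ofReal (logFac s) ^ α * rearr n f s ^ q) ^ (1 / q)

/-- The weak Zygmund norm `‖f‖_{L^{q,∞}(log L)^α}`. -/
noncomputable def weakZygNorm (n : ℕ) (q α : ℝ)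
    (f : EuclideanSpace ℝ (Fin n) → ℝ) : ℝ≥0∞ :=
  ⨆ s : Set.Ioi (0 : ℝ),
    (ENNReal.ofReal (logFac s.1) ^ α * ENNReal.ofReal s.1 * rearr n f s.1 ^ q) ^ (1 / q)

lemma one_le_logFac {s : ℝ} (hs : 0 < s) : 1 ≤ logFac s := by
  unfold logFac
  rw [Real.le_log_iff_exp_le (by positivity)]
  have : 0 < 1 / s := by positivity
  linarith

lemma logFac_anti {s e : ℝ} (hs : 0 < s) (h : s ≤ e) : logFac e ≤ logFac s := by
  unfold logFac
  have he : 0 < e := hs.trans_le h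
  apply Real.log_le_log (by positivity)
  gcongr

lemma logFac_key {s e b : ℝ} (hs : 0 < s) (h : s ≤ e) (hb : 0 < b) :
    logFac s ^ b * s ≤ (1 + b) ^ b * (logFac e ^ b * e) := by
  have he : 0 < e := hs.trans_le h
  have hL := one_le_logFac he
  have hx : 1 ≤ e / s := by rwa [one_le_div hs]
  have hx0 : 0 < e / s := by positivity
  have h1 : logFac s ≤ logFac e + Real.log (e / s) := by
    unfold logFac
    rw [← Real.log_mul (by positivity) (by positivity)]
    apply Real.log_le_log (by positivity)
    have : (rexp 1 + 1 / e) * (e / s) = rexp 1 * (e / s) + 1 / s := by field_simp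
    rw [this]
    have := Real.exp_pos 1
    nlinarith
  have h2 : Real.log (e / s) ≤ (e / s) ^ (1 / b) / (1 / b) :=
    Real.log_le_rpow_div hx0.le (by positivity)
  have h3 : 1 ≤ (e / s) ^ (1 / b) := Real.one_le_rpow hx (by positivity)
  have h4 : logFac s ≤ (1 + b) * logFac e * (e / s) ^ (1 / b) := by
    have h5 : (e / s) ^ (1 / b) / (1 / b) = b * (e / s) ^ (1 / b) := by field_simp
    rw [h5] at h2
    set y := (e / s) ^ (1 / b)
    have : 0 ≤ b * y * (logFac e - 1) := by
      have : 0 ≤ logFac e - 1 := by linarith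
      positivity
    nlinarith
  have h0 : 0 ≤ logFac s := by linarith [one_le_logFac hs]
  calc logFac s ^ b * s ≤ ((1 + b) * logFac e * (e / s) ^ (1 / b)) ^ b * s := by gcongr
    _ = (1 + b) ^ b * logFac e ^ b * (e / s) * s := by
      rw [Real.mul_rpow (by positivity) (by positivity), Real.mul_rpow (by positivity) (by positivity),
        ← Real.rpow_mul hx0.le]
      simp [hb.ne']
    _ = _ := by field_simp

lemma logFac_min {s e b : ℝ} (hs : 0 < s) (he : 0 < e) (hb : 0 < b) :
    ENNReal.ofReal (logFac s) ^ b * ENNReal.ofReal (min s e) ≤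
      ENNReal.ofReal ((1 + b) ^ b * (logFac e ^ b * e)) := by
  have h0 := one_le_logFac hs
  have h1 := one_le_logFac he
  rw [ENNReal.ofReal_rpow_of_nonneg (by linarith) hb.le, ← ENNReal.ofReal_mul (by positivity)]
  apply ENNReal.ofReal_le_ofReal
  rcases le_total s e with h | h
  · rw [min_eq_left h]; exact logFac_key hs h hb
  · rw [min_eq_right h]
    have h2 := logFac_anti he h
    have h3 : 1 ≤ (1 + b) ^ b := Real.one_le_rpow (by linarith) hb.le
    calc logFac s ^ b * e ≤ logFac e ^ b * e := by gcongr
      _ ≤ _ := le_mul_of_one_le_left (by positivity) h3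

lemma exists_vol (n : ℕ) (hn : 1 ≤ n) (e : ℝ) (he : 0 < e) :
    ∃ A : Set (EuclideanSpace ℝ (Fin n)), MeasurableSet A ∧ volume A = ENNReal.ofReal e := by
  set v := volume (Metric.ball (0 : EuclideanSpace ℝ (Fin n)) 1) with hv
  have hv0 : v ≠ 0 := (Metric.measure_ball_pos _ _ one_pos).ne'
  have hvt : v ≠ ⊤ := measure_ball_lt_top.ne
  have hvr : 0 < v.toReal := ENNReal.toReal_pos hv0 hvt
  refine ⟨Metric.closedBall 0 ((e / v.toReal) ^ (1 / (n : ℝ))), Metric.isClosed_closedBall.measurableSet, ?_⟩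
  rw [Measure.addHaar_closedBall _ _ (by positivity), ← hv, finrank_euclideanSpace_fin,
    ← Real.rpow_natCast, ← Real.rpow_mul (by positivity)]
  have : (1 / (n : ℝ)) * n = 1 := by
    have : (n : ℝ) ≠ 0 := by positivity
    field_simp
  rw [this, Real.rpow_one]
  have h2 : v = ENNReal.ofReal v.toReal := (ENNReal.ofReal_toReal hvt).symm
  calc _ = ENNReal.ofReal (e / v.toReal) * ENNReal.ofReal v.toReal := by rw [← h2]
    _ = _ := by
      rw [← ENNReal.ofReal_mul (by positivity), div_mul_cancel₀ _ hvr.ne']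

theorem stmt18 (n : ℕ) (hn : 1 ≤ n) (q α : ℝ) (hq : 1 ≤ q) (hα : 0 < α) :
    ∀ δ > (0 : ℝ), ∃ f : EuclideanSpace ℝ (Fin n) → ℝ,
      LocallyIntegrable f volume ∧
      0 < weakZygNorm n q (α + 1) f ∧ weakZygNorm n q (α + 1) f < ⊤ ∧
      zygNorm n q α f ≤ ENNReal.ofReal δ * weakZygNorm n q (α + 1) f := by
  intro δ hδ
  have hq0 : 0 < q := by linarith
  set K := 2 * (1 + α) ^ α / δ ^ q with hK
  set e := Real.exp (-K) with hedef
  have he : 0 < e := Real.exp_pos _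
  have hLK : K ≤ logFac e := by
    unfold logFac
    rw [Real.le_log_iff_exp_le (by positivity), hedef, Real.exp_neg]
    have := Real.exp_pos 1
    simp only [one_div, inv_inv]
    linarith
  have hL1 := one_le_logFac he
  obtain ⟨A, hA, hvA⟩ := exists_vol n hn e he
  set f : EuclideanSpace ℝ (Fin n) → ℝ := A.indicator (fun _ => 1) with hf
  have hr1 : ∀ s, rearr n f s ≤ 1 := by
    intro s
    apply sInf_le
    have : {x | (1 : ℝ≥0∞) < ENNReal.ofReal |f x|} = ∅ := by
      ext x
      by_cases hx : x ∈ A <;> simp [hf, hx]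
    simp only [mem_setOf_eq, this, measure_empty, zero_le]
  have hr0 : ∀ s, e ≤ s → rearr n f s = 0 := by
    intro s hs
    apply le_antisymm _ (zero_le)
    apply sInf_le
    have : {x | (0 : ℝ≥0∞) < ENNReal.ofReal |f x|} = A := by
      ext x
      by_cases hx : x ∈ A <;> simp [hf, hx]
    simp only [mem_setOf_eq, this, hvA]
    exact ENNReal.ofReal_le_ofReal hs
  have hr2 : 1 ≤ rearr n f (e / 2) := by
    apply le_sInf
    intro l hl
    by_contra hcon
    have hl1 : l < 1 := not_le.mp hcon
    have hsub : A ⊆ {x | l < ENNReal.ofReal |f x|} := by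
      intro x hx
      simp [hf, hx, hl1]
    have h1 := (measure_mono hsub).trans hl
    rw [hvA, ENNReal.ofReal_le_ofReal_iff (by positivity)] at h1
    linarith
  have hlow : (ENNReal.ofReal (logFac e ^ (α + 1) * (e / 2))) ^ (1 / q) ≤
      weakZygNorm n q (α + 1) f := by
    refine le_trans ?_ (le_iSup _ (⟨e / 2, by simpa using he⟩ : Set.Ioi (0 : ℝ)))
    apply ENNReal.rpow_le_rpow _ (by positivity)
    have h2 : logFac e ≤ logFac (e / 2) := logFac_anti (by positivity) (by linarith)
    rw [ENNReal.ofReal_mul (by positivity),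
      ← ENNReal.ofReal_rpow_of_nonneg (by linarith) (by positivity)]
    calc _ ≤ ENNReal.ofReal (logFac (e / 2)) ^ (α + 1) * ENNReal.ofReal (e / 2) * 1 := by
          rw [mul_one]; gcongr
      _ ≤ _ := by
          gcongr
          exact ENNReal.one_le_rpow hr2 hq0
  refine ⟨f, ?_, ?_, ?_, ?_⟩
  · apply Integrable.locallyIntegrable
    rw [hf, integrable_indicator_iff hA]
    exact integrableOn_const (by rw [hvA]; exact ENNReal.ofReal_ne_top)
  · refine lt_of_lt_of_le ?_ hlow
    apply ENNReal.rpow_pos _ ENNReal.ofReal_ne_top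
    rw [ENNReal.ofReal_pos]
    positivity
  · refine lt_of_le_of_lt (b := (ENNReal.ofReal ((1 + (α + 1)) ^ (α + 1) *
      (logFac e ^ (α + 1) * e))) ^ (1 / q)) ?_
      (ENNReal.rpow_lt_top_of_nonneg (by positivity) ENNReal.ofReal_ne_top)
    apply iSup_le
    rintro ⟨s, hs⟩
    have hs : 0 < s := hs
    apply ENNReal.rpow_le_rpow _ (by positivity)
    refine le_trans ?_ (logFac_min hs he (by positivity))
    rw [mul_assoc]
    gcongr
    rcases le_total e s with h | h
    · simp only [hr0 s h, ENNReal.zero_rpow_of_pos hq0, mul_zero, zero_le]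
    · rw [min_eq_left h]
      exact mul_le_of_le_one_right (zero_le) (ENNReal.rpow_le_one (hr1 s) hq0.le)
  · refine le_trans ?_ (mul_le_mul_right hlow _)
    have hd : ENNReal.ofReal δ = (ENNReal.ofReal (δ ^ q)) ^ (1 / q) := by
      rw [← ENNReal.ofReal_rpow_of_nonneg hδ.le hq0.le, ← ENNReal.rpow_mul]
      simp [hq0.ne']
    rw [hd, ← ENNReal.mul_rpow_of_nonneg _ _ (by positivity), ← ENNReal.ofReal_mul (by positivity)]
    apply iSup_le
    rintro ⟨s, hs⟩
    have hs : 0 < s := hs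
    apply ENNReal.rpow_le_rpow _ (by positivity)
    calc _ ≤ ENNReal.ofReal (logFac s) ^ α * ENNReal.ofReal (min s e) := by
          gcongr
          apply iSup_le
          rintro ⟨E, hE, hvE⟩
          have : (fun x => ENNReal.ofReal (|f x| ^ q)) = A.indicator (fun _ => 1) := by
            ext x
            by_cases hx : x ∈ A <;> simp [hf, hx, hq0.ne']
          simp only [this]
          rw [lintegral_indicator_const hA, one_mul, Measure.restrict_apply hA]
          rcases le_total s e with h | h
          · rw [min_eq_left h]; exact (measure_mono inter_subset_right).trans hvE.le
          · rw [min_eq_right h]; exact (measure_mono inter_subset_left).trans hvA.le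
      _ ≤ _ := logFac_min hs he hα
      _ ≤ _ := by
          apply ENNReal.ofReal_le_ofReal
          rw [Real.rpow_add (by linarith), Real.rpow_one]
          have h1 : (1 + α) ^ α * 2 ≤ δ ^ q * logFac e := by
            have : 0 < δ ^ q := by positivity
            rw [hK, div_le_iff₀ this] at hLK
            linarith
          have h2 : 0 ≤ logFac e ^ α * e / 2 := by positivity
          nlinarith
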